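/- For every α > 1 there exist constants C > 0 and m₀ > 0 such that for every m > m₀ there exist a nonnegative integer ℓ and a positive zero j of J_ℓ satisfying 0 < j² − α²ℓ² + m ≤ C·√m. -/

import Mathlib

/-!
The function `w = √x J_ν(x)` solves `d²w/dx² + (1 - (ν² - 1/4) / x²) w = 0`. In a cone `x ≥ β |ν|`
with `β > 1` the potential is bounded below by a positive constant, so Sturm comparison with a sine
wave puts a zero of `J_ν` in every interval of some length `D` in that cone, uniformly in `ν`.

Take `1 < β < α` and an integer `ℓ` of order `√m` such that `y := √(α² ℓ² - m)` is at least `β ℓ`.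
A zero `j` of `J_ℓ` just above `y` then gives `j² - α² ℓ² + m = j² - y² = O(y) = O(√m)`.
-/

open Real Set

/-- The Bessel function of the first kind of order `ν`. -/
noncomputable def besselJ (ν x : ℝ) : ℝ :=
  ∑' m : ℕ, (-1 : ℝ) ^ m / (m.factorial * Real.Gamma (m + ν + 1)) * (x / 2) ^ (2 * (m : ℝ) + ν)

/-- `j` is a positive zero of the Bessel function `J_ν`. -/
def IsPosBesselZero (ν j : ℝ) : Prop := 0 < j ∧ besselJ ν j = 0

section SturmComparison

lemma mul_pos_of_continuousOn_of_forall_ne_zero {X : Type*} [TopologicalSpace X] {s : Set X}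
    (hs : IsPreconnected s) {f : X → ℝ} (hf : ContinuousOn f s) (hne : ∀ x ∈ s, f x ≠ 0)
    {x y : X} (hx : x ∈ s) (hy : y ∈ s) : 0 < f x * f y := by
  by_contra! hxy
  obtain ⟨z, hz, hz0⟩ : (0 : ℝ) ∈ f '' s := by
    rcases mul_nonpos_iff.mp hxy with ⟨hfx, hfy⟩ | ⟨hfx, hfy⟩
    · exact hs.intermediate_value hy hx hf ⟨hfy, hfx⟩
    · exact hs.intermediate_value hx hy hf ⟨hfx, hfy⟩
  exact hne z hz hz0

variable {u u' v v' p q : ℝ → ℝ} {a b : ℝ}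

theorem exists_eq_zero_of_sturm_comparison (hab : a ≤ b)
    (hu : ∀ x ∈ Icc a b, HasDerivWithinAt u (u' x) (Icc a b) x)
    (hu' : ∀ x ∈ Icc a b, HasDerivWithinAt u' (-(q x * u x)) (Icc a b) x)
    (hv : ∀ x ∈ Icc a b, HasDerivWithinAt v (v' x) (Icc a b) x)
    (hv' : ∀ x ∈ Icc a b, HasDerivWithinAt v' (-(p x * v x)) (Icc a b) x)
    (hpq : ∀ x ∈ Icc a b, p x ≤ q x) (hv_nonneg : ∀ x ∈ Icc a b, 0 ≤ v x)
    (hva : v a = 0) (hvb : v b = 0) (hv'a : 0 < v' a) (hv'b : v' b ≤ 0) :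
    ∃ x ∈ Icc a b, u x = 0 := by
  by_contra! hne
  have ha : a ∈ Icc a b := left_mem_Icc.mpr hab
  have hb : b ∈ Icc a b := right_mem_Icc.mpr hab
  have same_sign : ∀ x ∈ Icc a b, 0 < u a * u x := fun x hx =>
    mul_pos_of_continuousOn_of_forall_ne_zero isPreconnected_Icc
      (fun y hy => (hu y hy).continuousWithinAt) hne ha hx
  -- The Wronskian, scaled by `u a` to make its monotonicity independent of the sign of `u`.
  let W : ℝ → ℝ := fun x => u a * (u x * v' x - u' x * v x)
  have hW : ∀ x ∈ Icc a b,
      HasDerivWithinAt W ((q x - p x) * (u a * u x) * v x) (Icc a b) x := fun x hx =>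
    ((((hu x hx).mul (hv' x hx)).sub ((hu' x hx).mul (hv x hx))).const_mul (u a)).congr_deriv
      (by ring)
  have hW_mono : MonotoneOn W (Icc a b) :=
    monotoneOn_of_hasDerivWithinAt_nonneg (convex_Icc a b)
      (fun x hx => (hW x hx).continuousWithinAt)
      (fun x hx => (hW x (interior_subset hx)).mono interior_subset) fun x hx =>
        have hx := interior_subset hx
        mul_nonneg (mul_nonneg (sub_nonneg.mpr (hpq x hx)) (same_sign x hx).le) (hv_nonneg x hx)
  have hWa : 0 < W a := by
    have : W a = u a * u a * v' a := by simp only [W, hva]; ring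
    exact this ▸ mul_pos (same_sign a ha) hv'a
  have hWb : W b ≤ 0 := by
    have : W b = u a * u b * v' b := by simp only [W, hvb]; ring
    exact this ▸ mul_nonpos_of_nonneg_of_nonpos (same_sign b hb).le hv'b
  exact (hWa.trans_le (hW_mono ha hb hab)).not_ge hWb

theorem exists_eq_zero_of_sq_le_potential {κ : ℝ} (hκ : 0 < κ)
    (hu : ∀ x ∈ Icc a (a + π / κ), HasDerivWithinAt u (u' x) (Icc a (a + π / κ)) x)
    (hu' : ∀ x ∈ Icc a (a + π / κ), HasDerivWithinAt u' (-(q x * u x)) (Icc a (a + π / κ)) x)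
    (hq : ∀ x ∈ Icc a (a + π / κ), κ ^ 2 ≤ q x) :
    ∃ x ∈ Icc a (a + π / κ), u x = 0 := by
  have hphase : ∀ x, HasDerivAt (fun x => κ * (x - a)) κ x := fun x => by
    simpa using ((hasDerivAt_id x).sub_const a).const_mul κ
  have hend : κ * (a + π / κ - a) = π := by field_simp; ring
  refine exists_eq_zero_of_sturm_comparison (v := fun x => sin (κ * (x - a)))
    (v' := fun x => κ * cos (κ * (x - a))) (p := fun _ => κ ^ 2)
    (le_add_of_nonneg_right (by positivity)) hu hu' (fun x _ => ?_) (fun x _ => ?_) hq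
    (fun x hx => ?_) (by simp) (by simp only [hend, sin_pi])
    (by simpa using hκ) (by simp only [hend, cos_pi]; linarith)
  · exact ((hphase x).sin.congr_deriv (mul_comm _ _)).hasDerivWithinAt
  · exact (((hphase x).cos.const_mul κ).congr_deriv (by ring)).hasDerivWithinAt
  · refine sin_nonneg_of_nonneg_of_le_pi (mul_nonneg hκ.le (sub_nonneg.mpr hx.1)) ?_
    calc κ * (x - a) ≤ κ * (a + π / κ - a) := by gcongr; exact hx.2
      _ = π := hend

end SturmComparison

theorem hasDerivAt_tsum_mul_pow {𝕜 : Type*} [RCLike 𝕜] {c : ℕ → 𝕜}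
    (hc : ∀ r : ℝ, Summable fun k : ℕ => ‖(k + 1) * c (k + 1)‖ * r ^ k) (t : 𝕜) :
    HasDerivAt (fun z => ∑' k, c k * z ^ k) (∑' k : ℕ, (k + 1) * c (k + 1) * t ^ k) t := by
  have summable_bound : Summable fun k : ℕ => ‖k * c k‖ * (‖t‖ + 1) ^ (k - 1) :=
    (summable_nat_add_iff 1).mp (by simpa using hc (‖t‖ + 1))
  have norm_deriv_le : ∀ (k : ℕ), ∀ z ∈ Metric.ball (0 : 𝕜) (‖t‖ + 1),
      ‖c k * (k * z ^ (k - 1))‖ ≤ ‖k * c k‖ * (‖t‖ + 1) ^ (k - 1) := fun k z hz => by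
    calc ‖c k * (k * z ^ (k - 1))‖ = ‖k * c k‖ * ‖z‖ ^ (k - 1) := by
          rw [← norm_pow, ← norm_mul]; ring_nf
      _ ≤ _ := by gcongr; exact (mem_ball_zero_iff.mp hz).le
  have ht : t ∈ Metric.ball (0 : 𝕜) (‖t‖ + 1) := mem_ball_zero_iff.mpr (lt_add_one _)
  have summable_deriv : Summable fun k : ℕ => c k * (k * t ^ (k - 1)) :=
    .of_norm_bounded summable_bound fun k => norm_deriv_le k t ht
  refine (hasDerivAt_tsum_of_isPreconnected summable_bound Metric.isOpen_ball
    (convex_ball (0 : 𝕜) _).isPreconnected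
    (fun k z _ => (hasDerivAt_pow k z).const_mul (c k)) norm_deriv_le
    (Metric.mem_ball_self (by positivity)) ?_ ht).congr_deriv ?_
  · exact summable_of_ne_finset_zero (s := {0}) fun k hk => by simp_all
  · rw [summable_deriv.tsum_eq_zero_add]
    simp [mul_left_comm, mul_assoc]

section BesselClifford

/-- The coefficient of `t ^ k` in the Bessel–Clifford function of order `ν`. The convention
`Γ = 0` at the poles of `Γ`, together with `0⁻¹ = 0`, makes it the value of the entire function
`1 / Γ` there, so that all identities hold for every real `ν`. -/
noncomputable def besselCliffordCoeff (ν : ℝ) (k : ℕ) : ℝ :=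
  (k.factorial * Gamma (k + ν + 1))⁻¹

/-- The Bessel–Clifford function `∑ tᵏ / (k! Γ(k + ν + 1))`, the entire factor of `J_ν`: one has
`J_ν(x) = (x / 2) ^ ν * besselClifford ν (-(x / 2) ^ 2)`. -/
noncomputable def besselClifford (ν t : ℝ) : ℝ :=
  ∑' k, besselCliffordCoeff ν k * t ^ k

lemma besselCliffordCoeff_add_one (ν : ℝ) (k : ℕ) :
    besselCliffordCoeff (ν + 1) k = (k + 1) * besselCliffordCoeff ν (k + 1) := by
  have hk : (k : ℝ) + 1 ≠ 0 := by positivity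
  have harg : ((k + 1 : ℕ) : ℝ) + ν + 1 = k + (ν + 1) + 1 := by push_cast; ring
  rw [besselCliffordCoeff, besselCliffordCoeff, harg, Nat.factorial_succ, Nat.cast_mul,
    Nat.cast_add_one, mul_assoc, mul_inv ((k : ℝ) + 1), mul_inv_cancel_left₀ hk]

lemma besselCliffordCoeff_eq_mul_add_one (ν : ℝ) (k : ℕ) :
    besselCliffordCoeff ν k = (k + ν + 1) * besselCliffordCoeff (ν + 1) k := by
  rw [besselCliffordCoeff, besselCliffordCoeff, ← add_assoc (k : ℝ)]
  rcases eq_or_ne (k + ν + 1) 0 with h | h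
  · simp [h]
  · rw [Gamma_add_one h]
    field_simp

lemma summable_norm_besselCliffordCoeff_mul_pow (ν r : ℝ) :
    Summable fun k => ‖besselCliffordCoeff ν k‖ * r ^ k := by
  have hradius : (Complex.regularizedHGFunSeries 0 {(ν : ℂ) + 1}).radius = ⊤ :=
    Complex.radius_regularizedHGFunSeries_eq_top (by simp)
  have hcoeff : ∀ k, Complex.regularizedHGFunCoeff 0 {(ν : ℂ) + 1} k = besselCliffordCoeff ν k :=
    fun k => by
      have hGamma : Complex.Gamma (ν + 1 + k) = Gamma (k + ν + 1) := by
        rw [← Complex.Gamma_ofReal]; push_cast; ring_nf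
      simp [Complex.regularizedHGFunCoeff, besselCliffordCoeff, hGamma]
  refine .of_norm ?_
  have h := (Complex.regularizedHGFunSeries 0 {(ν : ℂ) + 1}).summable_norm_mul_pow
    (r := ‖r‖₊) (by simp [hradius])
  simpa [Complex.regularizedHGFunSeries, hcoeff] using h

lemma summable_besselClifford (ν t : ℝ) :
    Summable fun k => besselCliffordCoeff ν k * t ^ k :=
  .of_norm (by simpa using summable_norm_besselCliffordCoeff_mul_pow ν |t|)

theorem hasDerivAt_besselClifford (ν t : ℝ) :
    HasDerivAt (besselClifford ν) (besselClifford (ν + 1) t) t := by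
  have hsummable : ∀ r : ℝ,
      Summable fun k : ℕ => ‖(k + 1) * besselCliffordCoeff ν (k + 1)‖ * r ^ k := fun r => by
    simpa only [besselCliffordCoeff_add_one] using
      summable_norm_besselCliffordCoeff_mul_pow (ν + 1) r
  refine (hasDerivAt_tsum_mul_pow hsummable t).congr_deriv ?_
  simp only [besselClifford, besselCliffordCoeff_add_one]

theorem besselClifford_recurrence (ν t : ℝ) :
    besselClifford ν t = (ν + 1) * besselClifford (ν + 1) t + t * besselClifford (ν + 2) t := by
  have hsplit : ∀ k : ℕ, besselCliffordCoeff ν k * t ^ k =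
      (ν + 1) * (besselCliffordCoeff (ν + 1) k * t ^ k) +
        k * besselCliffordCoeff (ν + 1) k * t ^ k := fun k => by
    rw [besselCliffordCoeff_eq_mul_add_one]; ring
  have hshift : ∀ k : ℕ,
      (k + 1 : ℕ) * besselCliffordCoeff (ν + 1) (k + 1) * t ^ (k + 1) =
        t * (besselCliffordCoeff (ν + 2) k * t ^ k) := fun k => by
    rw [← one_add_one_eq_two, ← add_assoc, besselCliffordCoeff_add_one (ν + 1)]
    push_cast; ring
  have hsum₁ := (summable_besselClifford (ν + 1) t).mul_left (ν + 1)
  have hsum₂ : Summable fun k : ℕ => k * besselCliffordCoeff (ν + 1) k * t ^ k :=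
    (summable_nat_add_iff 1).mp <| by
      simpa only [hshift] using (summable_besselClifford (ν + 2) t).mul_left t
  simp only [besselClifford, hsplit]
  rw [hsum₁.tsum_add hsum₂, hsum₂.tsum_eq_zero_add]
  simp only [hshift, tsum_mul_left, Nat.cast_zero, zero_mul, zero_add]

end BesselClifford

section BesselJ

variable {ν x : ℝ}

lemma besselJ_eq_rpow_mul_besselClifford (hx : 0 < x) :
    besselJ ν x = (x / 2) ^ ν * besselClifford ν (-(x / 2) ^ 2) := by
  rw [besselJ, besselClifford, ← tsum_mul_left]
  refine tsum_congr fun k => ?_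
  have hpow : (x / 2) ^ (2 * (k : ℝ) + ν) = ((x / 2) ^ 2) ^ k * (x / 2) ^ ν := by
    rw [rpow_add (by positivity), ← pow_mul, ← rpow_natCast]
    push_cast; rfl
  rw [hpow, besselCliffordCoeff, neg_pow ((x / 2) ^ 2)]
  ring

theorem hasDerivAt_besselJ (hx : 0 < x) :
    HasDerivAt (besselJ ν) (ν / x * besselJ ν x - besselJ (ν + 1) x) x := by
  have hx2 : 0 < x / 2 := by positivity
  have hhalf : HasDerivAt (fun x : ℝ => x / 2) (1 / 2) x := (hasDerivAt_id x).div_const 2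
  have hclifford := (hasDerivAt_besselClifford ν (-(x / 2) ^ 2)).comp x (hhalf.pow 2).neg
  have hprod := (hhalf.rpow_const (p := ν) (.inl hx2.ne')).mul hclifford
  refine (hprod.congr_of_eventuallyEq ?_).congr_deriv ?_
  · filter_upwards [lt_mem_nhds hx] with z hz using besselJ_eq_rpow_mul_besselClifford hz
  · rw [besselJ_eq_rpow_mul_besselClifford hx, besselJ_eq_rpow_mul_besselClifford hx,
      rpow_add_one hx2.ne', rpow_sub_one hx2.ne']
    simp only [Function.comp_apply, Pi.neg_apply, Pi.pow_apply]
    field_simp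
    ring

theorem besselJ_add_besselJ_add_two (hx : 0 < x) :
    besselJ ν x + besselJ (ν + 2) x = 2 * (ν + 1) / x * besselJ (ν + 1) x := by
  have hx2 : x / 2 ≠ 0 := by positivity
  have hpow : (x / 2) ^ (ν + 2) = (x / 2) ^ ν * (x / 2) ^ 2 := mod_cast rpow_add_natCast hx2 ν 2
  simp only [besselJ_eq_rpow_mul_besselClifford hx]
  rw [besselClifford_recurrence ν, rpow_add_one hx2, hpow]
  field_simp
  ring

theorem hasDerivAt_besselJ_add_one (hx : 0 < x) :
    HasDerivAt (besselJ (ν + 1)) (besselJ ν x - (ν + 1) / x * besselJ (ν + 1) x) x := by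
  refine (hasDerivAt_besselJ hx).congr_deriv ?_
  have hrec := besselJ_add_besselJ_add_two (ν := ν) hx
  rw [show ν + 1 + 1 = ν + 2 by ring]
  linear_combination -hrec

/-- The Liouville normal form `√x J_ν(x)`, in which Bessel's equation loses its first-order term. -/
noncomputable def normalizedBesselJ (ν x : ℝ) : ℝ :=
  √x * besselJ ν x

/-- The derivative of `normalizedBesselJ ν` on `x > 0`. -/
noncomputable def normalizedBesselJDeriv (ν x : ℝ) : ℝ :=
  √x * ((ν + 1 / 2) / x * besselJ ν x - besselJ (ν + 1) x)

theorem hasDerivAt_normalizedBesselJ (hx : 0 < x) :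
    HasDerivAt (normalizedBesselJ ν) (normalizedBesselJDeriv ν x) x := by
  refine ((hasDerivAt_sqrt hx.ne').mul (hasDerivAt_besselJ hx)).congr_deriv ?_
  have hsq : √x ^ 2 = x := sq_sqrt hx.le
  rw [normalizedBesselJDeriv]
  field_simp
  rw [hsq]
  ring

theorem hasDerivAt_normalizedBesselJDeriv (hx : 0 < x) :
    HasDerivAt (normalizedBesselJDeriv ν)
      (-((1 - (ν ^ 2 - 1 / 4) / x ^ 2) * normalizedBesselJ ν x)) x := by
  have hcoeff : HasDerivAt (fun x => (ν + 1 / 2) / x) (-(ν + 1 / 2) / x ^ 2) x := by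
    simpa only [div_eq_mul_inv, neg_mul, mul_neg] using
      (hasDerivAt_inv hx.ne').const_mul (ν + 1 / 2)
  refine ((hasDerivAt_sqrt hx.ne').mul
    ((hcoeff.mul (hasDerivAt_besselJ hx)).sub (hasDerivAt_besselJ_add_one hx))).congr_deriv ?_
  have hsq : √x ^ 2 = x := sq_sqrt hx.le
  simp only [normalizedBesselJ, Pi.sub_apply, Pi.mul_apply]
  field_simp
  rw [hsq]
  ring

end BesselJ

section BesselZeros

theorem exists_besselJ_eq_zero_mem_Icc {ν κ a : ℝ} (hκ : 0 < κ) (ha : 0 < a)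
    (hν : ν ^ 2 ≤ (1 - κ ^ 2) * a ^ 2) : ∃ x ∈ Icc a (a + π / κ), besselJ ν x = 0 := by
  have hpos : ∀ x ∈ Icc a (a + π / κ), 0 < x := fun x hx => ha.trans_le hx.1
  have hκ1 : 0 ≤ 1 - κ ^ 2 := nonneg_of_mul_nonneg_left ((sq_nonneg ν).trans hν) (by positivity)
  obtain ⟨x, hx, hzero⟩ := exists_eq_zero_of_sq_le_potential hκ
    (fun x hx => (hasDerivAt_normalizedBesselJ (ν := ν) (hpos x hx)).hasDerivWithinAt)
    (fun x hx => (hasDerivAt_normalizedBesselJDeriv (hpos x hx)).hasDerivWithinAt)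
    fun x hx => by
      have hx0 := hpos x hx
      have hle : ν ^ 2 - 1 / 4 ≤ (1 - κ ^ 2) * x ^ 2 :=
        calc ν ^ 2 - 1 / 4 ≤ (1 - κ ^ 2) * a ^ 2 := by linarith
          _ ≤ (1 - κ ^ 2) * x ^ 2 := by gcongr; exact hx.1
      linarith [(div_le_iff₀ (by positivity)).mpr hle]
  exact ⟨x, hx, (mul_eq_zero.mp hzero).resolve_left (sqrt_pos.mpr (hpos x hx)).ne'⟩

theorem exists_isPosBesselZero_mem_Icc {β : ℝ} (hβ : 1 < β) :
    ∃ D : ℝ, 0 < D ∧ ∀ ν a : ℝ, 0 < a → β * |ν| ≤ a → ∃ j ∈ Icc a (a + D), IsPosBesselZero ν j := by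
  have hβ2 : 1 < β ^ 2 := one_lt_pow₀ hβ two_ne_zero
  have hpot : 0 < 1 - (β ^ 2)⁻¹ := sub_pos.mpr (inv_lt_one_of_one_lt₀ hβ2)
  refine ⟨π / √(1 - (β ^ 2)⁻¹), by positivity, fun ν a ha hν => ?_⟩
  have hsq : ν ^ 2 ≤ (1 - √(1 - (β ^ 2)⁻¹) ^ 2) * a ^ 2 := by
    rw [sq_sqrt hpot.le, sub_sub_cancel, le_inv_mul_iff₀ (by positivity), ← sq_abs ν, ← mul_pow]
    gcongr
  obtain ⟨j, hj, hzero⟩ := exists_besselJ_eq_zero_mem_Icc (sqrt_pos.mpr hpot) ha hsq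
  exact ⟨j, hj, ha.trans_le hj.1, hzero⟩

theorem exists_isPosBesselZero_sq_sub_sq_le {β : ℝ} (hβ : 1 < β) :
    ∃ C : ℝ, 0 < C ∧ ∀ ν y : ℝ, 0 ≤ y → β * |ν| ≤ y →
      ∃ j, IsPosBesselZero ν j ∧ 0 < j ^ 2 - y ^ 2 ∧ j ^ 2 - y ^ 2 ≤ C * (y + 1) := by
  obtain ⟨D, hD, hzero⟩ := exists_isPosBesselZero_mem_Icc hβ
  refine ⟨2 * (1 + D) ^ 2, by positivity, fun ν y hy hν => ?_⟩
  obtain ⟨j, ⟨hyj, hjy⟩, hj⟩ := hzero ν (y + 1) (by positivity) (by linarith)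
  refine ⟨j, hj, sub_pos.mpr (pow_lt_pow_left₀ (by linarith) hy two_ne_zero), ?_⟩
  calc j ^ 2 - y ^ 2 ≤ (y + 1 + D) ^ 2 - y ^ 2 := by gcongr; linarith
    _ = (1 + D) * (2 * y + (1 + D)) := by ring
    _ ≤ (1 + D) * (2 * (1 + D) * (y + 1)) := by gcongr; nlinarith [mul_nonneg hD.le hy]
    _ = 2 * (1 + D) ^ 2 * (y + 1) := by ring

end BesselZeros

lemma exists_nat_le_mul_and_le_mul {c s : ℝ} (hc : 0 < c) (hs : 1 ≤ s) :
    ∃ n : ℕ, s ≤ c * n ∧ n ≤ (c⁻¹ + 1) * s := by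
  refine ⟨⌈c⁻¹ * s⌉₊, (inv_mul_le_iff₀ hc).mp (Nat.le_ceil _), ?_⟩
  calc (⌈c⁻¹ * s⌉₊ : ℝ) ≤ c⁻¹ * s + 1 := (Nat.ceil_lt_add_one (by positivity)).le
    _ ≤ (c⁻¹ + 1) * s := by linarith

theorem stmt_14 (α : ℝ) (hα : 1 < α) :
    ∃ C m₀ : ℝ, 0 < C ∧ 0 < m₀ ∧ ∀ m : ℝ, m₀ < m →
      ∃ (ℓ : ℕ) (j : ℝ), IsPosBesselZero ℓ j ∧
        0 < j ^ 2 - α ^ 2 * (ℓ : ℝ) ^ 2 + m ∧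
        j ^ 2 - α ^ 2 * (ℓ : ℝ) ^ 2 + m ≤ C * Real.sqrt m := by
  obtain ⟨β, hβ, hβα⟩ := exists_between hα
  obtain ⟨C, hC, hzero⟩ := exists_isPosBesselZero_sq_sub_sq_le hβ
  have hgap : 0 < α ^ 2 - β ^ 2 := sub_pos.mpr (by gcongr)
  set c := √(α ^ 2 - β ^ 2)
  have hc : 0 < c := sqrt_pos.mpr hgap
  refine ⟨C * (α * (c⁻¹ + 1) + 1), 1, by positivity, one_pos, fun m hm => ?_⟩
  have hm1 : 1 ≤ √m := one_le_sqrt.mpr hm.le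
  obtain ⟨ℓ, hmℓ, hℓm⟩ := exists_nat_le_mul_and_le_mul hc hm1
  have hm_le : m ≤ (α ^ 2 - β ^ 2) * ℓ ^ 2 := by
    simpa [mul_pow, c, hgap.le] using (sqrt_le_left (by positivity)).mp hmℓ
  set y := √(α ^ 2 * ℓ ^ 2 - m)
  have hβy : β * |(ℓ : ℝ)| ≤ y := le_sqrt_of_sq_le (by rw [mul_pow, sq_abs]; linarith)
  have hyα : y ≤ α * ℓ := (sqrt_le_left (by positivity)).mpr (by rw [mul_pow]; linarith)
  have hy_sq : y ^ 2 = α ^ 2 * ℓ ^ 2 - m := sq_sqrt (by nlinarith [sq_nonneg (β * ℓ)])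
  obtain ⟨j, hj, hpos, hle⟩ := hzero ℓ y (sqrt_nonneg _) hβy
  rw [hy_sq, sub_sub_eq_add_sub, add_sub_right_comm] at hpos hle
  refine ⟨ℓ, j, hj, hpos, hle.trans ?_⟩
  calc C * (y + 1) ≤ C * (α * ((c⁻¹ + 1) * √m) + √m) := by gcongr; exact hyα.trans (by gcongr)
    _ = C * (α * (c⁻¹ + 1) + 1) * √m := by ring
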